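/- Fix integers n ≥ 3 and u ≥ 1, and consider the fan Δ_u with maximal cones σᵢ (1 ≤ i ≤ n) and σ_{ij} (1 ≤ i < j ≤ n). Then: the half-line ℝ_{≥0}·e is a ray (one-dimensional face) of each σᵢ, and the rays of σᵢ are exactly the half-lines ℝ_{≥0}·v for v among its listed generators {e, gᵢ} ∪ {f_k : k ≠ i}; the n-dimensional cones of Δ_u containing ℝ_{≥0}·e are exactly σ₁,…,σₙ; and each σᵢ is a pyramidal extension by the ray ℝ_{≥0}·e of the cone σᵢ' generated by {gᵢ} ∪ {f_k : k ≠ i}. Consequently, the ray ℝ_{≥0}·e is in Egyptian position in Δ_u. -/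

import Mathlib

/-!
Write `aᵢ = 1` for `i < n` and `aₙ = u`. Since `f₁ + ⋯ + fₙ = 0` and `gᵢ = -aᵢ e - fᵢ`, the `n + 1`
generators of `σᵢ` satisfy exactly one linear relation, `aᵢ e + gᵢ = ∑_{k ≠ i} f_k`, in which
`e` and the `f_k` (`k ≠ i`) form a basis of `ℝⁿ` (`exists_functional`, `map_gVec`).

* Prescribing a functional on this basis, one can expose every generator: there is a functional
  vanishing at it and positive at all the others (`exposed_genI`). Hence the rays of `σᵢ` are the
  half-lines on its generators (`Exposed.raysOf_eq`), and `σᵢ'` is generated by all generators but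
  `e` (`Exposed.primeCone_eq`).
* As `aᵢ > 0`, the generators of `σᵢ'` are again a basis, in which `e = (∑_{k ≠ i} f_k - gᵢ) / aᵢ`
  has a single negative coordinate, the one at `gᵢ`. So `e` is beyond the facet opposite to `gᵢ`
  and beneath all other facets (`pyramidal`).
* An `n`-dimensional face of a maximal cone is the whole cone (`face_eq_of_dim`), and `e` is not in
  any `σ_{ij}`, on which the last coordinate is nonpositive (`eVec_notMem_sigmaIJ`). So the
  `n`-dimensional cones containing `e` are the `σᵢ`.
-/

open Pointwise

/-- Ambient space `ℝⁿ`. -/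
abbrev V (n : ℕ) := Fin n → ℝ

/-- The polyhedral cone generated by a finite set of vectors:
all nonnegative linear combinations. -/
def coneOf {n : ℕ} (s : Finset (V n)) : Set (V n) :=
  {x | ∃ c : V n → ℝ, (∀ v, 0 ≤ c v) ∧ x = ∑ v ∈ s, c v • v}

/-- A polyhedral cone: the cone generated by finitely many vectors. -/
def IsPolyhedralCone {n : ℕ} (σ : Set (V n)) : Prop :=
  ∃ s : Finset (V n), σ = coneOf s

/-- A cone is strictly convex if `σ ∩ (−σ) = {0}`. -/
def IsStrictlyConvexCone {n : ℕ} (σ : Set (V n)) : Prop :=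
  σ ∩ (-σ) = {0}

/-- `τ` is a face of `σ`: cut out on `σ` by a linear functional nonnegative on `σ`. -/
def IsFaceOf {n : ℕ} (τ σ : Set (V n)) : Prop :=
  ∃ m : V n →ₗ[ℝ] ℝ, (∀ x ∈ σ, 0 ≤ m x) ∧ τ = {x ∈ σ | m x = 0}

/-- The dimension of a cone: the dimension of its linear span. -/
noncomputable def dimCone {n : ℕ} (σ : Set (V n)) : ℕ :=
  Module.finrank ℝ (Submodule.span ℝ σ)

/-- The ray `ℝ_{≥0}·x`. -/
def rayGen {n : ℕ} (x : V n) : Set (V n) :=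
  {y | ∃ c : ℝ, 0 ≤ c ∧ y = c • x}

/-- The set `σ(1)` of rays (one-dimensional faces) of `σ`. -/
def raysOf {n : ℕ} (σ : Set (V n)) : Set (Set (V n)) :=
  {ρ | IsFaceOf ρ σ ∧ dimCone ρ = 1}

/-- `η` is a facet of `σ`: a face of dimension `dim σ − 1`. -/
def IsFacetOf {n : ℕ} (η σ : Set (V n)) : Prop :=
  IsFaceOf η σ ∧ dimCone η = dimCone σ - 1

/-- The cone hull of an arbitrary set: all nonnegative combinations of
finitely many of its elements. -/
def coneHull {n : ℕ} (s : Set (V n)) : Set (V n) :=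
  {x | ∃ t : Finset (V n), ↑t ⊆ s ∧
    ∃ c : V n → ℝ, (∀ v, 0 ≤ c v) ∧ x = ∑ v ∈ t, c v • v}

/-- `σ'`: the cone generated by the union of the rays of `σ` other than `ρ`. -/
def primeCone {n : ℕ} (σ ρ : Set (V n)) : Set (V n) :=
  coneHull (⋃ ρ' ∈ raysOf σ \ {ρ}, ρ')

/-- `x` is beneath the supporting hyperplane `H_η` of the facet `η` of `κ`:
every witnessing functional is positive at `x`. -/
def Beneath {n : ℕ} (κ η : Set (V n)) (x : V n) : Prop :=
  ∀ m : V n →ₗ[ℝ] ℝ, (∀ y ∈ κ, 0 ≤ m y) → η = {y ∈ κ | m y = 0} → 0 < m x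

/-- `x` is beyond the supporting hyperplane `H_η` of the facet `η` of `κ`:
every witnessing functional is negative at `x`. -/
def Beyond {n : ℕ} (κ η : Set (V n)) (x : V n) : Prop :=
  ∀ m : V n →ₗ[ℝ] ℝ, (∀ y ∈ κ, 0 ≤ m y) → η = {y ∈ κ | m y = 0} → m x < 0

/-- `σ` (an `n`-dimensional cone in `ℝⁿ`) is a pyramidal extension of `σ'` by the
ray `ρ`, where `σ'` is the cone generated by the rays of `σ` other than `ρ`:
either `dim σ' = n − 1`, or `dim σ' = n` and there is precisely one facet `η` of
`σ'` such that the nonzero points of `ρ` are beyond `H_η`, while they are beneath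
`H_{η'}` for every other facet `η'` of `σ'`. -/
def IsPyramidalExtensionBy {n : ℕ} (σ ρ : Set (V n)) : Prop :=
  dimCone (primeCone σ ρ) = n - 1 ∨
  (dimCone (primeCone σ ρ) = n ∧
    ∃ η, IsFacetOf η (primeCone σ ρ) ∧
      (∀ x ∈ ρ, x ≠ 0 → Beyond (primeCone σ ρ) η x) ∧
      (∀ η', IsFacetOf η' (primeCone σ ρ) → η' ≠ η →
        ∀ x ∈ ρ, x ≠ 0 → Beneath (primeCone σ ρ) η' x))

/-- A fan in `ℝⁿ`: a finite collection of strictly convex polyhedral cones closed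
under taking faces, in which any two cones intersect in a common face. -/
def IsFan {n : ℕ} (Δ : Set (Set (V n))) : Prop :=
  Δ.Finite ∧
  (∀ σ ∈ Δ, IsPolyhedralCone σ ∧ IsStrictlyConvexCone σ) ∧
  (∀ σ ∈ Δ, ∀ τ, IsFaceOf τ σ → τ ∈ Δ) ∧
  (∀ σ ∈ Δ, ∀ τ ∈ Δ, IsFaceOf (σ ∩ τ) σ ∧ IsFaceOf (σ ∩ τ) τ)

/-! The vectors `e, f_i, h, g_i` and the cones `σ_i`, `σ_{ij}` of the fan `Δ_u`
(Section 6 of the paper), for `n ≥ 3` and an integer parameter `u`.  Indices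
`1, …, n` of the paper correspond to `0, …, n − 1 : Fin n`, the last index
`n` of the paper being `n − 1`. -/

/-- `e = eₙ`. -/
def eVec (n : ℕ) : V n := fun j => if (j : ℕ) = n - 1 then 1 else 0

/-- `fᵢ = eᵢ` for `i < n`, and `fₙ = −(e₁ + ⋯ + e_{n−1})`. -/
def fVec (n : ℕ) (i : Fin n) : V n :=
  if (i : ℕ) < n - 1 then Pi.single i 1
  else fun j => if (j : ℕ) = n - 1 then 0 else -1

/-- `h = −e`. -/
def hVec (n : ℕ) : V n := -eVec n

/-- `gᵢ = h − fᵢ` for `i < n`, and `gₙ = u·h − fₙ`. -/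
def gVec (n : ℕ) (u : ℤ) (i : Fin n) : V n :=
  if (i : ℕ) < n - 1 then hVec n - fVec n i
  else (u : ℝ) • hVec n - fVec n i

/-- The generators `{e, gᵢ} ∪ {f_k : k ≠ i}` of `σᵢ`. -/
noncomputable def genI (n : ℕ) (u : ℤ) (i : Fin n) : Finset (V n) :=
  insert (eVec n) (insert (gVec n u i) ((Finset.univ.erase i).image (fVec n)))

/-- The generators `{h, gᵢ, g_j} ∪ {f_k : k ≠ i, j}` of `σ_{ij}`. -/
noncomputable def genIJ (n : ℕ) (u : ℤ) (i j : Fin n) : Finset (V n) :=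
  insert (hVec n) (insert (gVec n u i) (insert (gVec n u j)
    (((Finset.univ.erase i).erase j).image (fVec n))))

/-- The cone `σᵢ`. -/
noncomputable def sigmaI (n : ℕ) (u : ℤ) (i : Fin n) : Set (V n) :=
  coneOf (genI n u i)

/-- The cone `σ_{ij}` (symmetric in `i`, `j`). -/
noncomputable def sigmaIJ (n : ℕ) (u : ℤ) (i j : Fin n) : Set (V n) :=
  coneOf (genIJ n u i j)

/-- The maximal cones `σᵢ (1 ≤ i ≤ n)` and `σ_{ij} (i ≠ j)` of `Δ_u`. -/
def maxCones (n : ℕ) (u : ℤ) : Set (Set (V n)) :=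
  {C | ∃ i, C = sigmaI n u i} ∪ {C | ∃ i j, i ≠ j ∧ C = sigmaIJ n u i j}

/-- The fan `Δ_u`: the maximal cones together with all their faces. -/
def deltaU (n : ℕ) (u : ℤ) : Set (Set (V n)) :=
  {τ | ∃ C ∈ maxCones n u, IsFaceOf τ C}

/-! ### Cones generated by finite sets -/

lemma coneOf_nonneg {n : ℕ} {s : Finset (V n)} {m : V n →ₗ[ℝ] ℝ} (hm : ∀ v ∈ s, 0 ≤ m v) :
    ∀ x ∈ coneOf s, 0 ≤ m x := by
  rintro x ⟨c, hc, rfl⟩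
  rw [map_sum]
  refine Finset.sum_nonneg fun v hv => ?_
  rw [map_smul, smul_eq_mul]
  exact mul_nonneg (hc v) (hm v hv)

lemma mem_coneOf {n : ℕ} {s : Finset (V n)} {v : V n} (hv : v ∈ s) : v ∈ coneOf s := by
  classical
  refine ⟨fun w => if w = v then 1 else 0, fun w => by dsimp only; split_ifs <;> norm_num, ?_⟩
  simp [hv]

lemma coneOf_smul {n : ℕ} {s : Finset (V n)} {x : V n} (hx : x ∈ coneOf s) {a : ℝ} (ha : 0 ≤ a) :
    a • x ∈ coneOf s := by
  obtain ⟨c, hc, rfl⟩ := hx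
  exact ⟨fun v => a * c v, fun v => mul_nonneg ha (hc v), by simp [Finset.smul_sum, mul_smul]⟩

lemma coneOf_add {n : ℕ} {s : Finset (V n)} {x y : V n} (hx : x ∈ coneOf s)
    (hy : y ∈ coneOf s) : x + y ∈ coneOf s := by
  obtain ⟨c, hc, rfl⟩ := hx
  obtain ⟨d, hd, rfl⟩ := hy
  exact ⟨fun v => c v + d v, fun v => add_nonneg (hc v) (hd v), by
    simp [Finset.sum_add_distrib, add_smul]⟩

lemma coneOf_sum {n : ℕ} {s : Finset (V n)} {ι : Type*} (t : Finset ι) (f : ι → V n)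
    (h : ∀ j ∈ t, f j ∈ coneOf s) : ∑ j ∈ t, f j ∈ coneOf s := by
  classical
  induction t using Finset.induction_on with
  | empty => exact ⟨0, fun _ => le_rfl, by simp⟩
  | insert a t ha ih =>
    rw [Finset.sum_insert ha]
    exact coneOf_add (h a (by simp)) (ih fun j hj => h j (by simp [hj]))

lemma self_mem_rayGen {n : ℕ} (v : V n) : v ∈ rayGen v := ⟨1, zero_le_one, by simp⟩

lemma span_rayGen {n : ℕ} (v : V n) : Submodule.span ℝ (rayGen v) = Submodule.span ℝ {v} := by
  apply le_antisymm
  · rw [Submodule.span_le]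
    rintro x ⟨c, -, rfl⟩
    exact Submodule.smul_mem _ _ (Submodule.mem_span_singleton_self v)
  · exact Submodule.span_mono (by simpa using self_mem_rayGen v)

lemma dimCone_rayGen {n : ℕ} {v : V n} (hv : v ≠ 0) : dimCone (rayGen v) = 1 := by
  rw [dimCone, span_rayGen, finrank_span_singleton hv]

/-- A functional that is nonnegative on the generators and vanishes at a nonnegative combination
vanishes at every generator occurring in it; this is what makes faces of a finitely generated cone
computable from the generators. -/
lemma coeff_eq_zero {n : ℕ} {s : Finset (V n)} {m : V n →ₗ[ℝ] ℝ} (hm : ∀ v ∈ s, 0 ≤ m v)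
    {c : V n → ℝ} (hc : ∀ v, 0 ≤ c v) (h : m (∑ v ∈ s, c v • v) = 0) :
    ∀ v ∈ s, m v ≠ 0 → c v = 0 := by
  intro v hv hmv
  simp only [map_sum, map_smul, smul_eq_mul] at h
  have := (Finset.sum_eq_zero_iff_of_nonneg
    (fun w hw => mul_nonneg (hc w) (hm w hw))).1 h v hv
  exact (mul_eq_zero.1 this).resolve_right hmv

/-- Every element `v` of `s` is nonzero and exposed: some linear functional vanishes at `v` and is
positive at the other elements of `s`. -/
def Exposed {n : ℕ} (s : Finset (V n)) : Prop :=
  ∀ v ∈ s, v ≠ 0 ∧ ∃ m : V n →ₗ[ℝ] ℝ, m v = 0 ∧ ∀ w ∈ s, w ≠ v → 0 < m w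

lemma Exposed.eq_of_mem_span {n : ℕ} {s : Finset (V n)} (hs : Exposed s) {v w : V n}
    (hv : v ∈ s) (hw : w ∈ s) (h : w ∈ Submodule.span ℝ {v}) : w = v := by
  obtain ⟨-, m, hm0, hm⟩ := hs v hv
  by_contra hne
  obtain ⟨a, rfl⟩ := Submodule.mem_span_singleton.1 h
  have := hm _ hw hne
  rw [map_smul, hm0, smul_zero] at this
  exact lt_irrefl _ this

/-- Only one generator survives on a one-dimensional face, because no two exposed generators are
proportional. -/
lemma Exposed.raysOf_eq {n : ℕ} {s : Finset (V n)} (hs : Exposed s) :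
    raysOf (coneOf s) = {r | ∃ v ∈ s, r = rayGen v} := by
  classical
  ext r
  constructor
  · rintro ⟨⟨m, hm, rfl⟩, hdim⟩
    have hms : ∀ v ∈ s, 0 ≤ m v := fun v hv => hm v (mem_coneOf hv)
    obtain ⟨v, hv, hmv⟩ : ∃ v ∈ s, m v = 0 := by
      by_contra! hcon
      have hz : {x ∈ coneOf s | m x = 0} ⊆ {0} := by
        rintro x ⟨⟨c, hc, rfl⟩, hx⟩
        refine Finset.sum_eq_zero fun w hw => ?_
        rw [coeff_eq_zero hms hc hx w hw (hcon w hw), zero_smul]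
      have hspan : Submodule.span ℝ {x ∈ coneOf s | m x = 0} = ⊥ :=
        eq_bot_iff.2 ((Submodule.span_mono hz).trans (by simp))
      rw [dimCone, hspan, finrank_bot] at hdim
      exact zero_ne_one hdim
    have hspan : Submodule.span ℝ {v} = Submodule.span ℝ {x ∈ coneOf s | m x = 0} := by
      refine Submodule.eq_of_le_of_finrank_eq (Submodule.span_mono ?_) ?_
      · simpa using ⟨mem_coneOf hv, hmv⟩
      · rw [finrank_span_singleton (hs v hv).1]
        exact hdim.symm
    refine ⟨v, hv, ?_⟩
    ext x
    constructor
    · rintro ⟨⟨c, hc, rfl⟩, hx⟩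
      refine ⟨c v, hc v, ?_⟩
      refine Finset.sum_eq_single v (fun w hw hne => ?_) (fun h => absurd hv h)
      rw [coeff_eq_zero hms hc hx w hw, zero_smul]
      intro hmw
      refine hne (hs.eq_of_mem_span hv hw ?_)
      rw [hspan]
      exact Submodule.subset_span ⟨mem_coneOf hw, hmw⟩
    · rintro ⟨c, hc, rfl⟩
      exact ⟨coneOf_smul (mem_coneOf hv) hc, by simp [hmv]⟩
  · rintro ⟨v, hv, rfl⟩
    obtain ⟨hv0, m, hm0, hm⟩ := hs v hv
    have hms : ∀ w ∈ s, 0 ≤ m w := by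
      intro w hw
      by_cases h : w = v
      · rw [h, hm0]
      · exact (hm w hw h).le
    refine ⟨⟨m, coneOf_nonneg hms, ?_⟩, dimCone_rayGen hv0⟩
    ext x
    constructor
    · rintro ⟨c, hc, rfl⟩
      exact ⟨coneOf_smul (mem_coneOf hv) hc, by simp [hm0]⟩
    · rintro ⟨⟨c, hc, rfl⟩, hx⟩
      refine ⟨c v, hc v, ?_⟩
      refine Finset.sum_eq_single v (fun w hw hne => ?_) (fun h => absurd hv h)
      rw [coeff_eq_zero hms hc hx w hw (hm w hw hne).ne', zero_smul]

lemma Exposed.primeCone_eq {n : ℕ} {s : Finset (V n)} (hs : Exposed s) {v : V n} (hv : v ∈ s) :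
    primeCone (coneOf s) (rayGen v) = coneOf (s.erase v) := by
  ext x
  rw [primeCone, hs.raysOf_eq]
  constructor
  · rintro ⟨t, ht, c, hc, rfl⟩
    refine coneOf_sum _ _ fun y hy => coneOf_smul ?_ (hc y)
    obtain ⟨r, ⟨⟨w, hw, rfl⟩, hne⟩, d, hd, rfl⟩ := Set.mem_iUnion₂.1 (ht hy)
    refine coneOf_smul (mem_coneOf (Finset.mem_erase.2 ⟨?_, hw⟩)) hd
    rintro rfl
    exact hne rfl
  · rintro ⟨c, hc, rfl⟩
    refine ⟨s.erase v, fun w hw => ?_, c, hc, rfl⟩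
    obtain ⟨hne, hw⟩ := Finset.mem_erase.1 hw
    refine Set.mem_iUnion₂.2 ⟨rayGen w, ⟨⟨w, hw, rfl⟩, fun h => hne ?_⟩, self_mem_rayGen w⟩
    refine hs.eq_of_mem_span hv hw ?_
    rw [← span_rayGen v, ← show rayGen w = rayGen v from h]
    exact Submodule.subset_span (self_mem_rayGen w)

/-! ### The vectors `e`, `fᵢ`, `gᵢ` -/

/-- The coefficient `aᵢ` in `gᵢ = aᵢ h - fᵢ`: it is `1` for `i < n` and `u` for `i = n`. -/
noncomputable def gCoeff (n : ℕ) (u : ℤ) (i : Fin n) : ℝ := if (i : ℕ) < n - 1 then 1 else u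

lemma gCoeff_pos {n : ℕ} {u : ℤ} (hu : 1 ≤ u) (i : Fin n) : 0 < gCoeff n u i := by
  unfold gCoeff
  split_ifs
  · exact one_pos
  · exact_mod_cast hu

lemma gVec_eq (n : ℕ) (u : ℤ) (i : Fin n) :
    gVec n u i = -(gCoeff n u i • eVec n) - fVec n i := by
  unfold gVec gCoeff hVec
  split_ifs <;> simp

lemma sum_fVec {n : ℕ} (hn : 3 ≤ n) : ∑ k, fVec n k = 0 := by
  obtain ⟨N, rfl⟩ : ∃ N, n = N + 1 := ⟨n - 1, by omega⟩
  rw [Fin.sum_univ_castSucc]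
  funext j
  refine Fin.lastCases ?_ (fun j => ?_) j
  · simp [fVec, Finset.sum_apply, Pi.single_apply, Fin.ext_iff]
    intro x hx
    have := x.2
    omega
  · simp [fVec, Finset.sum_apply, Pi.single_apply, j.2.ne]

lemma fVec_eq_neg_sum {n : ℕ} (hn : 3 ≤ n) (i : Fin n) :
    fVec n i = -∑ k ∈ Finset.univ.erase i, fVec n k := by
  have h := Finset.add_sum_erase Finset.univ (fVec n) (Finset.mem_univ i)
  rw [sum_fVec hn] at h
  exact eq_neg_of_add_eq_zero_left h

/-- The only linear relation among the generators of `σᵢ`, namely `aᵢ e + gᵢ = ∑_{k ≠ i} f_k`,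
evaluated by a functional. -/
lemma map_gVec {n : ℕ} (hn : 3 ≤ n) (u : ℤ) (i : Fin n) (m : V n →ₗ[ℝ] ℝ) :
    m (gVec n u i) = -(gCoeff n u i * m (eVec n)) + ∑ k ∈ Finset.univ.erase i, m (fVec n k) := by
  rw [gVec_eq, fVec_eq_neg_sum hn i, map_sub, map_neg, map_neg, map_sum, map_smul, smul_eq_mul,
    sub_neg_eq_add]

/-- `e` and the `f_k`, `k ≠ i`, are linearly independent: a functional may be prescribed on
them. -/
lemma exists_functional {n : ℕ} (hn : 3 ≤ n) (i : Fin n) (α : ℝ) (c : Fin n → ℝ) :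
    ∃ m : V n →ₗ[ℝ] ℝ, m (eVec n) = α ∧ ∀ l, l ≠ i → m (fVec n l) = c l := by
  classical
  -- `F k` reads the coordinate `k < n`; then `(F k - F i) (f_l) = δ_{kl} - δ_{il}`.
  let F : Fin n → V n →ₗ[ℝ] ℝ := fun k => if (k : ℕ) < n - 1 then LinearMap.proj k else 0
  have hFe : ∀ k, F k (eVec n) = 0 := by
    intro k
    by_cases hk : (k : ℕ) < n - 1
    · simp [F, eVec, hk, hk.ne]
    · simp [F, hk]
  have hFf : ∀ k l, F k (fVec n l) =
      (if k = l then 1 else 0) - (if (l : ℕ) < n - 1 then 0 else 1) := by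
    intro k l
    by_cases hk : (k : ℕ) < n - 1 <;> by_cases hl : (l : ℕ) < n - 1
    · simp [F, fVec, hk, hl, Pi.single_apply]
    · have : k ≠ l := by rintro rfl; exact hl hk
      simp [F, fVec, hk, hl, hk.ne, this]
    · have : k ≠ l := by rintro rfl; exact hk hl
      simp [F, hk, hl, this]
    · have : k = l := by ext; omega
      simp [F, hl, this]
  let E : V n →ₗ[ℝ] ℝ := LinearMap.proj ⟨n - 1, by omega⟩
  have hEe : E (eVec n) = 1 := by simp [E, eVec]
  have hEf : ∀ l, E (fVec n l) = 0 := by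
    intro l
    by_cases hl : (l : ℕ) < n - 1
    · have : (⟨n - 1, by omega⟩ : Fin n) ≠ l := fun h => hl.ne (congrArg Fin.val h).symm
      simp [E, fVec, hl, this]
    · simp [E, fVec, hl]
  refine ⟨α • E + ∑ k ∈ Finset.univ.erase i, c k • (F k - F i), ?_, fun l hl => ?_⟩
  · simp [hEe, hFe]
  · simp [hEf, hFf, hl.symm, LinearMap.sum_apply]

/-- `{gᵢ} ∪ {f_k : k ≠ i}` spans `ℝⁿ`. -/
lemma functional_eq_zero {n : ℕ} (hn : 3 ≤ n) {u : ℤ} (hu : 1 ≤ u) (i : Fin n)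
    {m : V n →ₗ[ℝ] ℝ} (hg : m (gVec n u i) = 0) (hf : ∀ k, k ≠ i → m (fVec n k) = 0) : m = 0 := by
  have hfi : m (fVec n i) = 0 := by
    rw [fVec_eq_neg_sum hn i, map_neg, map_sum, Finset.sum_eq_zero, neg_zero]
    exact fun k hk => hf k (Finset.ne_of_mem_erase hk)
  have hf' : ∀ k, m (fVec n k) = 0 := fun k => by
    by_cases h : k = i
    · rw [h, hfi]
    · exact hf k h
  have he : m (eVec n) = 0 := by
    have h := map_gVec hn u i m
    rw [hg, Finset.sum_eq_zero (fun k _ => hf' k)] at h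
    have := (gCoeff_pos hu i).ne'
    simpa [this] using h
  refine LinearMap.pi_ext' fun j => ?_
  ext
  by_cases hj : (j : ℕ) < n - 1
  · simpa [fVec, hj] using hf' j
  · have : eVec n = Pi.single j 1 := by
      funext k
      have : (k : ℕ) = n - 1 ↔ k = j := by
        rw [Fin.ext_iff]
        omega
      simp [eVec, Pi.single_apply, this]
    simpa [this] using he

lemma mem_genI {n : ℕ} {u : ℤ} {i : Fin n} {v : V n} :
    v ∈ genI n u i ↔ v = eVec n ∨ v = gVec n u i ∨ ∃ k, k ≠ i ∧ fVec n k = v := by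
  simp [genI]

/-- To see that the generators of `σᵢ` are exposed, choose for each of them a functional with
suitable values on the basis `e`, `f_k` (`k ≠ i`): the relation `aᵢ e + gᵢ = ∑ f_k` then
determines its value at `gᵢ`. That there are at least two `f_k` is what makes the `f_k`
extreme. -/
lemma exposed_genI {n : ℕ} (hn : 3 ≤ n) {u : ℤ} (hu : 1 ≤ u) (i : Fin n) :
    Exposed (genI n u i) := by
  classical
  have ha := gCoeff_pos hu i
  have hn' : (3 : ℝ) ≤ n := by exact_mod_cast hn
  have hcard : ((Finset.univ.erase i).card : ℝ) = n - 1 := by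
    rw [Finset.card_erase_of_mem (Finset.mem_univ i), Finset.card_univ, Fintype.card_fin,
      Nat.cast_sub (by omega), Nat.cast_one]
  have hexp : ∀ v ∈ genI n u i,
      ∃ m : V n →ₗ[ℝ] ℝ, m v = 0 ∧ ∀ w ∈ genI n u i, w ≠ v → 0 < m w := by
    intro v hv
    rcases mem_genI.1 hv with rfl | rfl | ⟨l, hl, rfl⟩
    · obtain ⟨m, he, hf⟩ := exists_functional hn i 0 (fun _ => 1)
      refine ⟨m, he, fun w hw hne => ?_⟩
      rcases mem_genI.1 hw with rfl | rfl | ⟨k, hk, rfl⟩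
      · exact absurd rfl hne
      · rw [map_gVec hn, he, Finset.sum_congr rfl fun k hk => hf k (Finset.ne_of_mem_erase hk)]
        simp only [Finset.sum_const, nsmul_eq_mul, hcard]
        linarith
      · rw [hf k hk]
        exact one_pos
    · obtain ⟨m, he, hf⟩ := exists_functional hn i (n - 1) (fun _ => gCoeff n u i)
      refine ⟨m, ?_, fun w hw hne => ?_⟩
      · rw [map_gVec hn, he, Finset.sum_congr rfl fun k hk => hf k (Finset.ne_of_mem_erase hk)]
        simp only [Finset.sum_const, nsmul_eq_mul, hcard]
        ring
      rcases mem_genI.1 hw with rfl | rfl | ⟨k, hk, rfl⟩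
      · rw [he]
        linarith
      · exact absurd rfl hne
      · rw [hf k hk]
        exact ha
    · obtain ⟨m, he, hf⟩ := exists_functional hn i 1
        (fun k => if k = l then 0 else 2 * gCoeff n u i)
      refine ⟨m, by simp [hf l hl], fun w hw hne => ?_⟩
      rcases mem_genI.1 hw with rfl | rfl | ⟨k, hk, rfl⟩
      · rw [he]
        exact one_pos
      · have hsum : ∑ k ∈ Finset.univ.erase i, m (fVec n k)
            = (n - 2) * (2 * gCoeff n u i) := by
          rw [← Finset.add_sum_erase _ _ (Finset.mem_erase.2 ⟨hl, Finset.mem_univ l⟩), hf l hl,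
            Finset.sum_congr rfl (g := fun _ => 2 * gCoeff n u i) fun k hk => by
              rw [hf k (by simp at hk; exact hk.2), if_neg (Finset.ne_of_mem_erase hk)]]
          have h1 : 1 ≤ (Finset.univ.erase i).card := Finset.card_pos.2 ⟨l, by simp [hl]⟩
          rw [Finset.sum_const, Finset.card_erase_of_mem (by simp [hl]), nsmul_eq_mul,
            Nat.cast_sub h1, hcard]
          simp only [if_true, zero_add, Nat.cast_one]
          ring
        rw [map_gVec hn, he, hsum]
        nlinarith
      · rw [hf k hk, if_neg (by rintro rfl; exact hne rfl)]
        positivity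
  refine fun v hv => ⟨?_, hexp v hv⟩
  rintro rfl
  -- if `0` were a generator, every exposing functional would force all generators to be `0`
  have hall : ∀ w ∈ genI n u i, w = 0 := by
    intro w hw
    obtain ⟨m, -, hm⟩ := hexp w hw
    by_contra hne
    have := hm 0 hv (Ne.symm hne)
    rw [map_zero] at this
    exact lt_irrefl _ this
  obtain ⟨m, he, -⟩ := exists_functional hn i 1 0
  rw [hall (eVec n) (mem_genI.2 (Or.inl rfl)), map_zero] at he
  exact zero_ne_one he

lemma genI_erase {n : ℕ} (hn : 3 ≤ n) {u : ℤ} (hu : 1 ≤ u) (i : Fin n) :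
    (genI n u i).erase (eVec n) = insert (gVec n u i) ((Finset.univ.erase i).image (fVec n)) := by
  refine Finset.erase_insert ?_
  intro hmem
  -- this functional is negative at `e` and nonnegative at the other generators
  obtain ⟨m, he, hf⟩ := exists_functional hn i (-1) (fun _ => 0)
  rcases Finset.mem_insert.1 hmem with h | h
  · have hfg := map_gVec hn u i m
    rw [← h, he, Finset.sum_eq_zero fun k hk => hf k (Finset.ne_of_mem_erase hk)] at hfg
    linarith [gCoeff_pos hu i]
  · obtain ⟨k, hk, hke⟩ := Finset.mem_image.1 h
    have := hf k (Finset.ne_of_mem_erase hk)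
    rw [hke, he] at this
    norm_num at this

/-! ### The pyramidal extension -/

lemma span_eq_top_of {n : ℕ} {S : Set (V n)}
    (h : ∀ m : V n →ₗ[ℝ] ℝ, (∀ x ∈ S, m x = 0) → m = 0) : Submodule.span ℝ S = ⊤ := by
  by_contra hne
  obtain ⟨m, hm0, hm⟩ := Submodule.exists_le_ker_of_lt_top _ (lt_top_iff_ne_top.2 hne)
  exact hm0 (h m fun x hx => hm (Submodule.subset_span hx))

/-- The simplicial cone `σᵢ'`: its facets are cut out by the dual basis of `gᵢ`, `f_k`, and `e` has
coordinates `-1/aᵢ` at `gᵢ` and `1/aᵢ` at each `f_k`. -/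
lemma pyramidal {n : ℕ} (hn : 3 ≤ n) {u : ℤ} (hu : 1 ≤ u) (i : Fin n)
    (hprime : primeCone (sigmaI n u i) (rayGen (eVec n))
        = coneOf (insert (gVec n u i) ((Finset.univ.erase i).image (fVec n)))) :
    IsPyramidalExtensionBy (sigmaI n u i) (rayGen (eVec n)) := by
  right
  rw [hprime]
  set T := insert (gVec n u i) ((Finset.univ.erase i).image (fVec n)) with hT
  have ha := gCoeff_pos hu i
  have hgT : gVec n u i ∈ coneOf T := mem_coneOf (Finset.mem_insert_self _ _)
  have hfT : ∀ k, k ≠ i → fVec n k ∈ coneOf T := fun k hk =>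
    mem_coneOf (Finset.mem_insert_of_mem (Finset.mem_image_of_mem _ (by simp [hk])))
  have hTnonneg : ∀ m : V n →ₗ[ℝ] ℝ, 0 ≤ m (gVec n u i) → (∀ k, k ≠ i → 0 ≤ m (fVec n k)) →
      ∀ x ∈ coneOf T, 0 ≤ m x := by
    intro m hg hf
    refine coneOf_nonneg fun v hv => ?_
    rcases Finset.mem_insert.1 hv with rfl | h
    · exact hg
    · obtain ⟨k, hk, rfl⟩ := Finset.mem_image.1 h
      exact hf k (Finset.ne_of_mem_erase hk)
  have hspan : Submodule.span ℝ (coneOf T) = ⊤ := span_eq_top_of fun m hm =>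
    functional_eq_zero hn hu i (hm _ hgT) fun k hk => hm _ (hfT k hk)
  have hdim : dimCone (coneOf T) = n := by
    rw [dimCone, hspan, finrank_top, Module.finrank_fin_fun]
  -- the coordinate at `gᵢ` with respect to the basis `gᵢ`, `f_k` (`k ≠ i`)
  obtain ⟨m₀, he₀, hf₀⟩ := exists_functional hn i (-(gCoeff n u i)⁻¹) (fun _ => 0)
  have hg₀ : m₀ (gVec n u i) = 1 := by
    rw [map_gVec hn, he₀, Finset.sum_eq_zero fun k hk => hf₀ k (Finset.ne_of_mem_erase hk)]
    field_simp
    simp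
  have hnonneg₀ : ∀ x ∈ coneOf T, 0 ≤ m₀ x :=
    hTnonneg m₀ (by rw [hg₀]; exact zero_le_one) fun k hk => (hf₀ k hk).ge
  have hker₀ : Module.finrank ℝ (LinearMap.ker m₀) < n := by
    have : LinearMap.ker m₀ < ⊤ := by
      rw [lt_top_iff_ne_top]
      intro h
      have : gVec n u i ∈ LinearMap.ker m₀ := h ▸ Submodule.mem_top
      rw [LinearMap.mem_ker, hg₀] at this
      exact one_ne_zero this
    simpa using Submodule.finrank_lt this.ne
  refine ⟨hdim, {x ∈ coneOf T | m₀ x = 0}, ⟨⟨m₀, hnonneg₀, rfl⟩, ?_⟩, ?_, ?_⟩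
  · rw [hdim, dimCone]
    apply le_antisymm
    · have : Submodule.span ℝ {x ∈ coneOf T | m₀ x = 0} ≤ LinearMap.ker m₀ :=
        Submodule.span_le.2 fun x hx => hx.2
      have := Submodule.finrank_mono this
      omega
    · -- together with `gᵢ` this facet spans everything
      have htop : Submodule.span ℝ {x ∈ coneOf T | m₀ x = 0} ⊔
          Submodule.span ℝ {gVec n u i} = ⊤ := by
        rw [← Submodule.span_union]
        exact span_eq_top_of fun m hm => functional_eq_zero hn hu i (hm _ (Or.inr rfl))
          fun k hk => hm _ (Or.inl ⟨hfT k hk, hf₀ k hk⟩)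
      have h1 := Submodule.finrank_add_le_finrank_add_finrank
        (Submodule.span ℝ {x ∈ coneOf T | m₀ x = 0}) (Submodule.span ℝ {gVec n u i})
      have h2 : Module.finrank ℝ (Submodule.span ℝ {gVec n u i}) ≤ 1 := by
        simpa using finrank_span_le_card (R := ℝ) ({gVec n u i} : Set (V n))
      rw [htop, finrank_top, Module.finrank_fin_fun] at h1
      omega
  · rintro x ⟨c, hc, rfl⟩ hx0 m hm hη
    have hc : 0 < c := lt_of_le_of_ne hc (by rintro rfl; simp at hx0)
    have hmf : ∀ k, k ≠ i → m (fVec n k) = 0 := fun k hk => by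
      have : fVec n k ∈ {y ∈ coneOf T | m y = 0} := hη ▸ ⟨hfT k hk, hf₀ k hk⟩
      exact this.2
    have hmg : 0 < m (gVec n u i) := by
      refine lt_of_le_of_ne (hm _ hgT) fun h => ?_
      have : gVec n u i ∈ {y ∈ coneOf T | m₀ y = 0} := hη ▸ ⟨hgT, h.symm⟩
      exact one_ne_zero (hg₀.symm.trans this.2)
    rw [map_gVec hn, Finset.sum_eq_zero fun k hk => hmf k (Finset.ne_of_mem_erase hk)] at hmg
    rw [map_smul, smul_eq_mul]
    refine mul_neg_of_pos_of_neg hc ?_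
    by_contra! hcon
    have := mul_nonneg ha.le hcon
    linarith
  · rintro η' ⟨-, hdimη⟩ hne x ⟨c, hc, rfl⟩ hx0 m hm hη
    have hc : 0 < c := lt_of_le_of_ne hc (by rintro rfl; simp at hx0)
    rw [map_smul, smul_eq_mul]
    refine mul_pos hc ?_
    rw [hdim, hη] at hdimη
    have hmg := hm _ hgT
    have hmf : ∀ k, k ≠ i → 0 ≤ m (fVec n k) := fun k hk => hm _ (hfT k hk)
    by_cases hall : ∀ k, k ≠ i → m (fVec n k) = 0
    · exfalso
      -- here `m = m(gᵢ) m₀`, so `η'` is either the whole cone or the facet cut out by `m₀`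
      have hmul : m = m (gVec n u i) • m₀ := by
        rw [← sub_eq_zero]
        refine functional_eq_zero hn hu i (by simp [hg₀]) fun k hk => ?_
        simp [hall k hk, hf₀ k hk]
      by_cases hz : m (gVec n u i) = 0
      · have hm0 : m = 0 := by rw [hmul, hz, zero_smul]
        rw [hm0] at hdimη
        simp only [LinearMap.zero_apply, and_true, Set.ofPred_mem_eq, hdim] at hdimη
        omega
      · refine hne (hη.trans ?_)
        ext y
        have : m y = m (gVec n u i) * m₀ y := by
          conv_lhs => rw [hmul]
          rfl
        simp [this, hz]
    · push Not at hall
      obtain ⟨l, hl, hml⟩ := hall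
      have hml : 0 < m (fVec n l) := lt_of_le_of_ne (hmf l hl) (Ne.symm hml)
      have hz : m (gVec n u i) = 0 := by
        by_contra hgne
        have hgpos : 0 < m (gVec n u i) := lt_of_le_of_ne hmg (Ne.symm hgne)
        -- otherwise `η'` lies in the codimension-two subspace `ker m ∩ ker m₀`
        have hsub : Submodule.span ℝ {y ∈ coneOf T | m y = 0} ≤
            LinearMap.ker m ⊓ LinearMap.ker m₀ := by
          refine Submodule.span_le.2 fun y hy => ⟨hy.2, ?_⟩
          have h1 := hTnonneg (m - m (gVec n u i) • m₀) (by simp [hg₀])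
            (fun k hk => by simpa [hf₀ k hk] using hmf k hk) y hy.1
          have h2 := hnonneg₀ y hy.1
          simp only [LinearMap.sub_apply, LinearMap.smul_apply, smul_eq_mul, hy.2] at h1
          refine le_antisymm ?_ h2
          by_contra! hpos
          have := mul_pos hgpos hpos
          linarith
        have hlt : LinearMap.ker m ⊓ LinearMap.ker m₀ < LinearMap.ker m₀ := by
          refine lt_of_le_of_ne inf_le_right fun h => hml.ne' ?_
          have : fVec n l ∈ LinearMap.ker m ⊓ LinearMap.ker m₀ := by
            rw [h]
            exact hf₀ l hl
          exact this.1
        have h1 := Submodule.finrank_mono hsub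
        have h2 := Submodule.finrank_lt_finrank_of_lt hlt
        rw [dimCone] at hdimη
        omega
      have hsum : 0 < ∑ k ∈ Finset.univ.erase i, m (fVec n k) :=
        Finset.sum_pos' (fun k hk => hmf k (Finset.ne_of_mem_erase hk)) ⟨l, by simp [hl], hml⟩
      rw [map_gVec hn] at hz
      by_contra! hcon
      have := mul_nonneg ha.le (neg_nonneg.2 hcon)
      linarith

/-! ### Maximal cones containing `e` -/

/-- The last coordinate is nonpositive on `σ_{ij}` but positive at `e`. -/
lemma eVec_notMem_sigmaIJ {n : ℕ} (hn : 3 ≤ n) {u : ℤ} (hu : 1 ≤ u) (i j : Fin n) :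
    eVec n ∉ sigmaIJ n u i j := by
  intro hmem
  obtain ⟨m, he, hf⟩ := exists_functional hn i (-1) (fun _ => 0)
  have hfi : m (fVec n i) = 0 := by
    rw [fVec_eq_neg_sum hn i, map_neg, map_sum,
      Finset.sum_eq_zero fun k hk => hf k (Finset.ne_of_mem_erase hk), neg_zero]
  have hf' : ∀ k, m (fVec n k) = 0 := fun k => by
    by_cases h : k = i
    · rw [h, hfi]
    · exact hf k h
  have hg : ∀ k, 0 ≤ m (gVec n u k) := fun k => by
    rw [gVec_eq]
    simp [he, hf', (gCoeff_pos hu k).le]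
  have := coneOf_nonneg (s := genIJ n u i j) (m := m) (fun v hv => by
    simp only [genIJ, Finset.mem_insert, Finset.mem_image] at hv
    rcases hv with rfl | rfl | rfl | ⟨k, -, rfl⟩
    · simp [hVec, he]
    · exact hg i
    · exact hg j
    · exact (hf' k).ge) _ hmem
  rw [he] at this
  norm_num at this

/-- A face cut out by a nonzero functional lies in its kernel. -/
lemma face_eq_of_dim {n : ℕ} {C τ : Set (V n)} (h : IsFaceOf τ C) (hdim : dimCone τ = n) :
    τ = C := by
  obtain ⟨m, -, rfl⟩ := h
  have hle : Submodule.span ℝ {x ∈ C | m x = 0} ≤ LinearMap.ker m :=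
    Submodule.span_le.2 fun x hx => hx.2
  have htop : Submodule.span ℝ {x ∈ C | m x = 0} = ⊤ :=
    Submodule.eq_top_of_finrank_eq (by rw [Module.finrank_fin_fun]; exact hdim)
  have hm : m = 0 := by
    rw [← LinearMap.ker_eq_top, eq_top_iff, ← htop]
    exact hle
  simp [hm]

/-!
STATEMENT 13: For `n ≥ 3`, `u ≥ 1`: the half-line `ℝ_{≥0}·e` is a ray of each
`σᵢ`; the rays of `σᵢ` are exactly the half-lines generated by its listed
generators; the `n`-dimensional cones of `Δ_u` containing `ℝ_{≥0}·e` are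
exactly `σ₁, …, σₙ`; and each `σᵢ` is a pyramidal extension by `ℝ_{≥0}·e` of
the cone `σᵢ'` generated by `{gᵢ} ∪ {f_k : k ≠ i}`.  Consequently `ℝ_{≥0}·e`
is in Egyptian position in `Δ_u`.
-/

theorem stmt_13 (n : ℕ) (hn : 3 ≤ n) (u : ℤ) (hu : 1 ≤ u) :
    -- ℝ≥0·e is a ray of each σᵢ
    (∀ i : Fin n, rayGen (eVec n) ∈ raysOf (sigmaI n u i)) ∧
    -- the rays of σᵢ are exactly the half-lines on its listed generators
    (∀ i : Fin n, raysOf (sigmaI n u i) = {r | ∃ v ∈ genI n u i, r = rayGen v}) ∧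
    -- the n-dimensional cones of Δ_u containing ℝ≥0·e are exactly σ₁, …, σₙ
    (∀ C ∈ deltaU n u, dimCone C = n →
      (rayGen (eVec n) ⊆ C ↔ ∃ i : Fin n, C = sigmaI n u i)) ∧
    -- each σᵢ is a pyramidal extension by ℝ≥0·e of σᵢ' = cone({gᵢ} ∪ {f_k : k ≠ i})
    (∀ i : Fin n,
      primeCone (sigmaI n u i) (rayGen (eVec n))
        = coneOf (insert (gVec n u i) ((Finset.univ.erase i).image (fVec n))) ∧
      IsPyramidalExtensionBy (sigmaI n u i) (rayGen (eVec n))) ∧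
    -- consequently, ℝ≥0·e is in Egyptian position in Δ_u
    (∀ C ∈ deltaU n u, dimCone C = n → rayGen (eVec n) ∈ raysOf C →
      IsPyramidalExtensionBy C (rayGen (eVec n))) := by
  have hrays : ∀ i, raysOf (sigmaI n u i) = {r | ∃ v ∈ genI n u i, r = rayGen v} := fun i =>
    (exposed_genI hn hu i).raysOf_eq
  have hemem : ∀ i, eVec n ∈ genI n u i := fun i => mem_genI.2 (Or.inl rfl)
  have hmax : ∀ C ∈ deltaU n u, dimCone C = n →
      (rayGen (eVec n) ⊆ C ↔ ∃ i : Fin n, C = sigmaI n u i) := by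
    rintro C ⟨D, hD, hface⟩ hdim
    obtain rfl := face_eq_of_dim hface hdim
    constructor
    · intro hsub
      rcases hD with h | ⟨i, j, -, rfl⟩
      · exact h
      · exact absurd (hsub (self_mem_rayGen _)) (eVec_notMem_sigmaIJ hn hu i j)
    · rintro ⟨i, rfl⟩ x ⟨c, hc, rfl⟩
      exact coneOf_smul (mem_coneOf (hemem i)) hc
  have hpyr : ∀ i : Fin n,
      primeCone (sigmaI n u i) (rayGen (eVec n))
        = coneOf (insert (gVec n u i) ((Finset.univ.erase i).image (fVec n))) ∧
      IsPyramidalExtensionBy (sigmaI n u i) (rayGen (eVec n)) := by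
    intro i
    have hprime : primeCone (sigmaI n u i) (rayGen (eVec n))
        = coneOf (insert (gVec n u i) ((Finset.univ.erase i).image (fVec n))) := by
      rw [← genI_erase hn hu i]
      exact (exposed_genI hn hu i).primeCone_eq (hemem i)
    exact ⟨hprime, pyramidal hn hu i hprime⟩
  refine ⟨fun i => ?_, hrays, hmax, hpyr, fun C hC hdim hray => ?_⟩
  · rw [hrays i]
    exact ⟨_, hemem i, rfl⟩
  · obtain ⟨⟨m, -, hm⟩, -⟩ := hray
    have hsub : rayGen (eVec n) ⊆ C := by
      rw [hm]
      exact Set.sep_subset _ _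
    obtain ⟨i, rfl⟩ := (hmax C hC hdim).1 hsub
    exact (hpyr i).2
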